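/- Let α be a join-semilattice with a least element ⊥ and a greatest element ⊤. The following are equivalent: (1) α is Noetherian, i.e. every nonempty totally ordered subset of α has a greatest element; (2) every subset S of α has a least upper bound in α, and this least upper bound equals the join of some finite subset of S (so α is a complete lattice in which every element is finite/compact). -/

import Mathlib

/-!
The nonempty finite joins of a nonempty set `S` form a directed set with the same upper bounds as
`S`. By Zorn's lemma the Noetherian condition gives this set, if bounded above, a maximal element,
which by directedness is its greatest element and hence the least upper bound of `S`. Conversely, a
chain is closed under nonempty finite joins, so a chain whose least upper bound is such a join
attains it.
-/

/-- The Noetherian condition of the paper, for an arbitrary preorder. Only chains bounded above in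
`α` are constrained, so it is weaker than `WellFoundedGT α`: it holds in `ℕ`. -/
def IsNoetherianOrder (α : Type*) [Preorder α] : Prop :=
  ∀ S : Set α, S.Nonempty → BddAbove S → IsChain (· ≤ ·) S → ∃ m, IsGreatest S m

namespace IsNoetherianOrder

variable {α : Type*} [Preorder α] {S : Set α}

theorem exists_maximal (h : IsNoetherianOrder α) (hne : S.Nonempty) (hS : BddAbove S) :
    ∃ m, Maximal (· ∈ S) m := by
  obtain ⟨x, hx⟩ := hne
  obtain ⟨m, -, hm⟩ := zorn_le_nonempty₀ S (fun C hCS hC y hy ↦ by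
    obtain ⟨m, hmC, hm⟩ := h C ⟨y, hy⟩ (hS.mono hCS) hC
    exact ⟨m, hCS hmC, hm⟩) x hx
  exact ⟨m, hm⟩

theorem exists_isGreatest_of_directedOn (h : IsNoetherianOrder α) (hne : S.Nonempty)
    (hS : BddAbove S) (hdir : DirectedOn (· ≤ ·) S) : ∃ m, IsGreatest S m := by
  obtain ⟨m, hm⟩ := h.exists_maximal hne hS
  exact ⟨m, hm.prop, hdir.is_top_of_is_max hm.prop fun _ ha hma ↦ hm.le_of_ge ha hma⟩

end IsNoetherianOrder

section SemilatticeSup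

variable {α : Type*} [SemilatticeSup α] {S : Set α}

theorem supClosed_of_isChain (hS : IsChain (· ≤ ·) S) : SupClosed S := by
  intro a ha b hb
  rcases hS.total ha hb with hab | hba
  · rwa [sup_eq_right.mpr hab]
  · rwa [sup_eq_left.mpr hba]

theorem IsNoetherianOrder.exists_mem_supClosure_isLUB (h : IsNoetherianOrder α)
    (hne : S.Nonempty) (hS : BddAbove S) : ∃ a ∈ supClosure S, IsLUB S a := by
  have hbdd : BddAbove (supClosure S) := by rwa [BddAbove, upperBounds_supClosure]
  obtain ⟨a, ha⟩ := h.exists_isGreatest_of_directedOn (hne.mono subset_supClosure) hbdd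
    supClosed_supClosure.directedOn
  exact ⟨a, ha.1, isLUB_supClosure.mp ha.isLUB⟩

theorem isNoetherianOrder_iff_exists_mem_supClosure_isLUB :
    IsNoetherianOrder α ↔
      ∀ S : Set α, S.Nonempty → BddAbove S → ∃ a ∈ supClosure S, IsLUB S a := by
  refine ⟨fun h S ↦ h.exists_mem_supClosure_isLUB, fun h S hne hS hchain ↦ ?_⟩
  obtain ⟨a, ha, hlub⟩ := h S hne hS
  rw [supClosure_eq_self.mpr (supClosed_of_isChain hchain)] at ha
  exact ⟨a, ha, hlub.1⟩

end SemilatticeSup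

section OrderBot

variable {α : Type*} [SemilatticeSup α] [OrderBot α] {S : Set α} {a : α}

theorem exists_finset_eq_sup_id_iff :
    (∃ J : Finset α, ↑J ⊆ S ∧ a = J.sup id) ↔ a = ⊥ ∨ a ∈ supClosure S := by
  constructor
  · rintro ⟨J, hJS, rfl⟩
    rcases J.eq_empty_or_nonempty with rfl | hJ
    · exact .inl Finset.sup_empty
    · exact .inr (supClosed_supClosure.finsetSup_mem hJ fun _ hx ↦ subset_supClosure (hJS hx))
  · rintro (rfl | ⟨J, hJ, hJS, rfl⟩)
    · exact ⟨∅, by simp⟩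
    · exact ⟨J, hJS, Finset.sup'_eq_sup hJ id⟩

theorem exists_finset_eq_sup_id_iff_of_isLUB (hne : S.Nonempty) (ha : IsLUB S a) :
    (∃ J : Finset α, ↑J ⊆ S ∧ a = J.sup id) ↔ a ∈ supClosure S := by
  rw [exists_finset_eq_sup_id_iff, or_iff_right_of_imp]
  rintro rfl
  obtain ⟨x, hx⟩ := hne
  have hx_bot : x = ⊥ := le_bot_iff.mp (ha.1 hx)
  exact subset_supClosure (hx_bot ▸ hx)

theorem stmt1_general :
    IsNoetherianOrder α ↔
      ∀ S : Set α, BddAbove S → ∃ a : α, IsLUB S a ∧ ∃ J : Finset α, ↑J ⊆ S ∧ a = J.sup id := by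
  rw [isNoetherianOrder_iff_exists_mem_supClosure_isLUB]
  constructor
  · intro h S hS
    rcases S.eq_empty_or_nonempty with rfl | hne
    · exact ⟨⊥, isLUB_empty, ∅, by simp⟩
    · obtain ⟨a, ha, hlub⟩ := h S hne hS
      exact ⟨a, hlub, (exists_finset_eq_sup_id_iff_of_isLUB hne hlub).mpr ha⟩
  · intro h S hne hS
    obtain ⟨a, hlub, hfin⟩ := h S hS
    exact ⟨a, (exists_finset_eq_sup_id_iff_of_isLUB hne hlub).mp hfin, hlub⟩

end OrderBot

/-- For a bounded span (join-semilattice with ⊥ and ⊤): Noetherian (every nonempty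
chain has a greatest element) iff every subset has a least upper bound which is
the join of a finite subset of it. -/
theorem stmt1 {α : Type*} [SemilatticeSup α] [OrderBot α] [OrderTop α] :
    (∀ S : Set α, S.Nonempty → IsChain (· ≤ ·) S → ∃ m ∈ S, ∀ y ∈ S, y ≤ m) ↔
    (∀ S : Set α, ∃ a : α, IsLUB S a ∧ ∃ J : Finset α, ↑J ⊆ S ∧ a = J.sup id) := by
  simpa only [IsNoetherianOrder, OrderTop.bddAbove, forall_const, IsGreatest, mem_upperBounds]
    using stmt1_general (α := α)
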